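/- arXiv:1909.09255 — 2 statements merged into one kernel-verified Lean document; each statement's English description precedes it below -/
import Mathlib

section
/- Let n ≥ 2, fix indices i₀, j₀ ∈ {1,…,n}, and let M = (m_{ij}) be an n×n complex matrix such that all entries in row i₀ and in column j₀ are nonzero. Then there exist diagonal unitary matrices D_L and D_R such that every entry of D_L · M · D_R is real, if and only if Im(m_{i₀j₀} · m_{kl} · conj(m_{i₀l}) · conj(m_{kj₀})) = 0 for all k ≠ i₀ and all l ≠ j₀. -/
/-!
Rephasing does not change the quartets `m_{i₀j₀} m_{kl} m̄_{i₀l} m̄_{kj₀}`, since every phase meets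
its conjugate. Phases can always be chosen so that the pivot row and the pivot column become
nonnegative real; the quartet of the rephased matrix is then a nonnegative real multiple of its
`(k, l)` entry, so when the pivot row and column have no zeros, one is real iff the other is.
-/

open ComplexConjugate

variable {m n : Type*}

/-- The rephasing `D_L M D_R` of `M`, where `u` and `v` are the diagonals of `D_L` and `D_R`. It is
defined entrywise so that infinite index types are allowed. -/
def rephase (u : m → Circle) (v : n → Circle) (M : Matrix m n ℂ) : Matrix m n ℂ :=
  Matrix.of fun i j ↦ u i * M i j * v j

/-- The quartet of `M` at the rows `i`, `k` and the columns `j`, `l`, whose imaginary part is a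
Jarlskog invariant. -/
def quartet (M : Matrix m n ℂ) (i : m) (j : n) (k : m) (l : n) : ℂ :=
  M i j * M k l * conj (M i l) * conj (M k j)

theorem rephase_apply (u : m → Circle) (v : n → Circle) (M : Matrix m n ℂ) (i : m) (j : n) :
    rephase u v M i j = u i * M i j * v j :=
  rfl

theorem diagonal_exp_mul_mul_diagonal_exp [Fintype m] [DecidableEq m] [Fintype n] [DecidableEq n]
    (φ : m → ℝ) (ψ : n → ℝ) (M : Matrix m n ℂ) :
    Matrix.diagonal (fun i ↦ Complex.exp ((φ i : ℂ) * Complex.I)) * M *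
        Matrix.diagonal (fun j ↦ Complex.exp ((ψ j : ℂ) * Complex.I)) =
      rephase (Circle.exp ∘ φ) (Circle.exp ∘ ψ) M := by
  ext i j
  simp only [Matrix.mul_diagonal, Matrix.diagonal_mul, rephase_apply, Function.comp_apply,
    Circle.coe_exp]

theorem quartet_rephase (u : m → Circle) (v : n → Circle) (M : Matrix m n ℂ)
    (i : m) (j : n) (k : m) (l : n) :
    quartet (rephase u v M) i j k l = quartet M i j k l := by
  simp only [quartet, rephase_apply, map_mul, ← Circle.coe_inv_eq_conj, Circle.coe_inv]
  field_simp

theorem im_quartet_eq_zero {M : Matrix m n ℂ} (hM : ∀ i j, (M i j).im = 0)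
    (i : m) (j : n) (k : m) (l : n) : (quartet M i j k l).im = 0 := by
  simp [quartet, Complex.mul_im, hM]

theorem exists_circle_mul_eq_norm (z : ℂ) : ∃ c : Circle, c * z = ‖z‖ := by
  obtain ⟨c, hc, hcz⟩ := RCLike.exists_norm_eq_mul_self z
  exact ⟨⟨c, mem_sphere_zero_iff_norm.2 hc⟩, hcz.symm⟩

theorem exists_rephase_pivot_eq_norm (M : Matrix m n ℂ) (i₀ : m) (j₀ : n) :
    ∃ u v, (∀ j, rephase u v M i₀ j = ‖M i₀ j‖) ∧ ∀ i, rephase u v M i j₀ = ‖M i j₀‖ := by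
  choose c hc using exists_circle_mul_eq_norm
  refine ⟨fun i ↦ c (M i j₀), fun j ↦ c (M i₀ j) / c (M i₀ j₀), fun j ↦ ?_, fun i ↦ ?_⟩
  · rw [rephase_apply, ← hc, Circle.coe_div]
    field_simp
  · rw [rephase_apply, div_self', Circle.coe_one, mul_one, hc]

theorem jarlskog_rephasing_to_real_entries_general_pivot_general
    (i₀ : m) (j₀ : n) (M : Matrix m n ℂ) (hrow : ∀ j, M i₀ j ≠ 0) (hcol : ∀ i, M i j₀ ≠ 0) :
    (∃ u v, ∀ i j, (rephase u v M i j).im = 0) ↔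
      ∀ k l, k ≠ i₀ → l ≠ j₀ → (quartet M i₀ j₀ k l).im = 0 := by
  constructor
  · rintro ⟨u, v, hreal⟩ k l - -
    rw [← quartet_rephase u v]
    exact im_quartet_eq_zero hreal i₀ j₀ k l
  · intro hquartet
    obtain ⟨u, v, hpivot_row, hpivot_col⟩ := exists_rephase_pivot_eq_norm M i₀ j₀
    refine ⟨u, v, fun k l ↦ ?_⟩
    obtain rfl | hk := eq_or_ne k i₀
    · rw [hpivot_row, Complex.ofReal_im]
    obtain rfl | hl := eq_or_ne l j₀
    · rw [hpivot_col, Complex.ofReal_im]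
    have quartet_eq : quartet M i₀ j₀ k l =
        (‖M i₀ j₀‖ * ‖M i₀ l‖ * ‖M k j₀‖ : ℝ) * rephase u v M k l := by
      rw [← quartet_rephase u v, quartet, hpivot_row, hpivot_row, hpivot_col]
      simp only [Complex.conj_ofReal, Complex.ofReal_mul]
      ring
    simpa [quartet_eq, Complex.re_ofReal_mul, Complex.im_ofReal_mul, hrow, hcol]
      using hquartet k l hk hl

/-- For fixed indices `i₀, j₀`, an `n × n` complex matrix `M` (with `n ≥ 2`)
whose row `i₀` and column `j₀` entries are all nonzero can be rephased to a matrix with all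
real entries by diagonal unitary matrices `D_L` and `D_R` if and only if
`Im(m_{i₀j₀} m_{kl} m̄_{i₀l} m̄_{kj₀}) = 0` for all `k ≠ i₀` and `l ≠ j₀`. -/
theorem jarlskog_rephasing_to_real_entries_general_pivot
    (n : ℕ) (hn : 2 ≤ n) (i₀ j₀ : Fin n) (M : Matrix (Fin n) (Fin n) ℂ)
    (hrow : ∀ j : Fin n, M i₀ j ≠ 0)
    (hcol : ∀ i : Fin n, M i j₀ ≠ 0) :
    (∃ φ ψ : Fin n → ℝ,
      ∀ i j : Fin n,
        ((Matrix.diagonal (fun i => Complex.exp ((φ i : ℂ) * Complex.I)) * M *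
          Matrix.diagonal (fun j => Complex.exp ((ψ j : ℂ) * Complex.I))) i j).im = 0) ↔
    (∀ k l : Fin n, k ≠ i₀ → l ≠ j₀ →
      (M i₀ j₀ * M k l *
        (starRingEnd ℂ) (M i₀ l) *
        (starRingEnd ℂ) (M k j₀)).im = 0) := by
  simpa only [diagonal_exp_mul_mul_diagonal_exp, Circle.exp_surjective.comp_left.exists, quartet]
    using jarlskog_rephasing_to_real_entries_general_pivot_general i₀ j₀ M hrow hcol
end

section
/- Let α_{12}, α_{13}, α_{14}, α_{23}, α_{24}, α_{34}, β_{13}, β_{14}, β_{24} be real numbers, write c_{ij} = cos α_{ij}, s_{ij} = sin α_{ij}, and assume all twelve quantities c_{12}, c_{13}, c_{14}, c_{23}, c_{24}, c_{34}, s_{12}, s_{13}, s_{14}, s_{23}, s_{24}, s_{34} are nonzero. Define J₁ = −sin β_{14} · c_{13} c_{14}² c_{24} s_{13} s_{14} s_{23} s_{24}; J₂ = cos β_{14} sin β_{13} · c_{12} c_{13} c_{14}² c_{23} c_{24} s_{12} s_{14} s_{24} + cos β_{13} sin β_{14} · c_{12} c_{13} c_{14}² c_{23} c_{24} s_{12}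 s_{14} s_{24} + sin β_{14} · c_{12}² c_{13} c_{14}² c_{24} s_{13} s_{14} s_{23} s_{24}; and J₃ = −sin β_{24} · c_{13} c_{14}² c_{23} c_{24} c_{34} s_{13} s_{14} s_{34} + sin β_{14} · c_{13} c_{14}² c_{24} s_{13} s_{14} s_{23} s_{24} s_{34}². Then (J₁ ≠ 0 or J₂ ≠ 0 or J₃ ≠ 0) if and only if (sin β_{13} ≠ 0 or sin β_{14} ≠ 0 or sin β_{24} ≠ 0). -/
open Real

/-!
Modulo multiples of `J₁`, the invariant `J₂` is a nonzero multiple of `sin (β₁₃ + β₁₄)` and `J₃` one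
of `sin β₂₄`, while `J₁` itself is a nonzero multiple of `sin β₁₄`. So the three invariants vanish
together iff these three sines do; and once `sin β₁₄ = 0`, the angles `β₁₃ + β₁₄` and `β₁₃` differ
by a multiple of `π`.
-/

/-- The Jarlskog invariant `J₁ = Im (V₁₁ V₂₂ V₁₂* V₂₁*)` of the 4×4 CKM matrix `V`, written in the
standard parametrization as a function of the mixing angles `αᵢⱼ` and phase `β₁₄` entering it. -/
noncomputable def jarlskog₁ (α₁₃ α₁₄ α₂₃ α₂₄ β₁₄ : ℝ) : ℝ :=
  -sin β₁₄ * cos α₁₃ * (cos α₁₄) ^ 2 * cos α₂₄ * sin α₁₃ * sin α₁₄ * sin α₂₃ * sin α₂₄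

/-- The Jarlskog invariant `J₂ = Im (V₁₁ V₂₃ V₁₃* V₂₁*)` of the 4×4 CKM matrix `V`, written in the
standard parametrization as a function of the mixing angles `αᵢⱼ` and phases `βᵢⱼ` entering it. -/
noncomputable def jarlskog₂ (α₁₂ α₁₃ α₁₄ α₂₃ α₂₄ β₁₃ β₁₄ : ℝ) : ℝ :=
  cos β₁₄ * sin β₁₃ * cos α₁₂ * cos α₁₃ * (cos α₁₄) ^ 2 * cos α₂₃ * cos α₂₄ *
      sin α₁₂ * sin α₁₄ * sin α₂₄ +
    cos β₁₃ * sin β₁₄ * cos α₁₂ * cos α₁₃ * (cos α₁₄) ^ 2 * cos α₂₃ * cos α₂₄ *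
      sin α₁₂ * sin α₁₄ * sin α₂₄ +
    sin β₁₄ * (cos α₁₂) ^ 2 * cos α₁₃ * (cos α₁₄) ^ 2 * cos α₂₄ *
      sin α₁₃ * sin α₁₄ * sin α₂₃ * sin α₂₄

/-- The Jarlskog invariant `J₃ = Im (V₁₁ V₃₂ V₁₂* V₃₁*)` of the 4×4 CKM matrix `V`, written in the
standard parametrization as a function of the mixing angles `αᵢⱼ` and phases `βᵢⱼ` entering it. -/
noncomputable def jarlskog₃ (α₁₃ α₁₄ α₂₃ α₂₄ α₃₄ β₁₄ β₂₄ : ℝ) : ℝ :=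
  -sin β₂₄ * cos α₁₃ * (cos α₁₄) ^ 2 * cos α₂₃ * cos α₂₄ * cos α₃₄ *
      sin α₁₃ * sin α₁₄ * sin α₃₄ +
    sin β₁₄ * cos α₁₃ * (cos α₁₄) ^ 2 * cos α₂₄ *
      sin α₁₃ * sin α₁₄ * sin α₂₃ * sin α₂₄ * (sin α₃₄) ^ 2

theorem sin_add_eq_zero_iff_of_sin_eq_zero {x y : ℝ} (hy : sin y = 0) :
    sin (x + y) = 0 ↔ sin x = 0 := by
  have hcos : cos y ≠ 0 := by
    rcases sin_eq_zero_iff_cos_eq.mp hy with h | h <;> simp [h]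
  simp [sin_add, hy, hcos]

section

variable {α₁₂ α₁₃ α₁₄ α₂₃ α₂₄ α₃₄ β₁₃ β₁₄ β₂₄ : ℝ}

theorem jarlskog₁_eq_zero_iff (hc13 : cos α₁₃ ≠ 0) (hc14 : cos α₁₄ ≠ 0) (hc24 : cos α₂₄ ≠ 0)
    (hs13 : sin α₁₃ ≠ 0) (hs14 : sin α₁₄ ≠ 0) (hs23 : sin α₂₃ ≠ 0) (hs24 : sin α₂₄ ≠ 0) :
    jarlskog₁ α₁₃ α₁₄ α₂₃ α₂₄ β₁₄ = 0 ↔ sin β₁₄ = 0 := by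
  simp [jarlskog₁, *]

theorem jarlskog₂_eq_sin_add_sub_jarlskog₁ :
    jarlskog₂ α₁₂ α₁₃ α₁₄ α₂₃ α₂₄ β₁₃ β₁₄ =
      cos α₁₂ * cos α₁₃ * cos α₁₄ ^ 2 * cos α₂₃ * cos α₂₄ * sin α₁₂ * sin α₁₄ * sin α₂₄ *
          sin (β₁₃ + β₁₄) -
        cos α₁₂ ^ 2 * jarlskog₁ α₁₃ α₁₄ α₂₃ α₂₄ β₁₄ := by
  rw [jarlskog₂, jarlskog₁, sin_add]
  ring

theorem jarlskog₃_eq_sin_sub_jarlskog₁ :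
    jarlskog₃ α₁₃ α₁₄ α₂₃ α₂₄ α₃₄ β₁₄ β₂₄ =
      -(cos α₁₃ * cos α₁₄ ^ 2 * cos α₂₃ * cos α₂₄ * cos α₃₄ * sin α₁₃ * sin α₁₄ * sin α₃₄ *
          sin β₂₄) -
        sin α₃₄ ^ 2 * jarlskog₁ α₁₃ α₁₄ α₂₃ α₂₄ β₁₄ := by
  rw [jarlskog₃, jarlskog₁]
  ring

theorem jarlskog₂_eq_zero_iff_of_jarlskog₁_eq_zero
    (hJ₁ : jarlskog₁ α₁₃ α₁₄ α₂₃ α₂₄ β₁₄ = 0)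
    (hc12 : cos α₁₂ ≠ 0) (hc13 : cos α₁₃ ≠ 0) (hc14 : cos α₁₄ ≠ 0) (hc23 : cos α₂₃ ≠ 0)
    (hc24 : cos α₂₄ ≠ 0) (hs12 : sin α₁₂ ≠ 0) (hs14 : sin α₁₄ ≠ 0) (hs24 : sin α₂₄ ≠ 0) :
    jarlskog₂ α₁₂ α₁₃ α₁₄ α₂₃ α₂₄ β₁₃ β₁₄ = 0 ↔ sin (β₁₃ + β₁₄) = 0 := by
  simp [jarlskog₂_eq_sin_add_sub_jarlskog₁, *]

theorem jarlskog₃_eq_zero_iff_of_jarlskog₁_eq_zero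
    (hJ₁ : jarlskog₁ α₁₃ α₁₄ α₂₃ α₂₄ β₁₄ = 0)
    (hc13 : cos α₁₃ ≠ 0) (hc14 : cos α₁₄ ≠ 0) (hc23 : cos α₂₃ ≠ 0) (hc24 : cos α₂₄ ≠ 0)
    (hc34 : cos α₃₄ ≠ 0) (hs13 : sin α₁₃ ≠ 0) (hs14 : sin α₁₄ ≠ 0) (hs34 : sin α₃₄ ≠ 0) :
    jarlskog₃ α₁₃ α₁₄ α₂₃ α₂₄ α₃₄ β₁₄ β₂₄ = 0 ↔ sin β₂₄ = 0 := by
  simp [jarlskog₃_eq_sin_sub_jarlskog₁, *]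

end

/-- **Theorem 4.** For generic mixing angles, at least one of the three
Jarlskog invariants `J₁`, `J₂`, `J₃` of the CKM4 matrix is nonzero iff at least one of the
CP phases is nonvanishing: `sin β₁₃ ≠ 0` or `sin β₁₄ ≠ 0` or `sin β₂₄ ≠ 0`. -/
theorem jarlskog_CP_violation_SM4
    (α₁₂ α₁₃ α₁₄ α₂₃ α₂₄ α₃₄ β₁₃ β₁₄ β₂₄ : ℝ)
    (hc12 : cos α₁₂ ≠ 0) (hc13 : cos α₁₃ ≠ 0) (hc14 : cos α₁₄ ≠ 0)
    (hc23 : cos α₂₃ ≠ 0) (hc24 : cos α₂₄ ≠ 0) (hc34 : cos α₃₄ ≠ 0)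
    (hs12 : sin α₁₂ ≠ 0) (hs13 : sin α₁₃ ≠ 0) (hs14 : sin α₁₄ ≠ 0)
    (hs23 : sin α₂₃ ≠ 0) (hs24 : sin α₂₄ ≠ 0) (hs34 : sin α₃₄ ≠ 0) :
    (-sin β₁₄ * cos α₁₃ * (cos α₁₄) ^ 2 * cos α₂₄ * sin α₁₃ * sin α₁₄ * sin α₂₃ * sin α₂₄ ≠ 0 ∨
      cos β₁₄ * sin β₁₃ * cos α₁₂ * cos α₁₃ * (cos α₁₄) ^ 2 * cos α₂₃ * cos α₂₄ *
          sin α₁₂ * sin α₁₄ * sin α₂₄ +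
        cos β₁₃ * sin β₁₄ * cos α₁₂ * cos α₁₃ * (cos α₁₄) ^ 2 * cos α₂₃ * cos α₂₄ *
          sin α₁₂ * sin α₁₄ * sin α₂₄ +
        sin β₁₄ * (cos α₁₂) ^ 2 * cos α₁₃ * (cos α₁₄) ^ 2 * cos α₂₄ *
          sin α₁₃ * sin α₁₄ * sin α₂₃ * sin α₂₄ ≠ 0 ∨
      -sin β₂₄ * cos α₁₃ * (cos α₁₄) ^ 2 * cos α₂₃ * cos α₂₄ * cos α₃₄ *
          sin α₁₃ * sin α₁₄ * sin α₃₄ +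
        sin β₁₄ * cos α₁₃ * (cos α₁₄) ^ 2 * cos α₂₄ *
          sin α₁₃ * sin α₁₄ * sin α₂₃ * sin α₂₄ * (sin α₃₄) ^ 2 ≠ 0) ↔
    (sin β₁₃ ≠ 0 ∨ sin β₁₄ ≠ 0 ∨ sin β₂₄ ≠ 0) := by
  change jarlskog₁ α₁₃ α₁₄ α₂₃ α₂₄ β₁₄ ≠ 0 ∨ jarlskog₂ α₁₂ α₁₃ α₁₄ α₂₃ α₂₄ β₁₃ β₁₄ ≠ 0 ∨
    jarlskog₃ α₁₃ α₁₄ α₂₃ α₂₄ α₃₄ β₁₄ β₂₄ ≠ 0 ↔ _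
  simp only [ne_eq, ← not_and_or, not_iff_not]
  have hJ₁ : jarlskog₁ α₁₃ α₁₄ α₂₃ α₂₄ β₁₄ = 0 ↔ sin β₁₄ = 0 :=
    jarlskog₁_eq_zero_iff hc13 hc14 hc24 hs13 hs14 hs23 hs24
  calc
    _ ↔ jarlskog₁ α₁₃ α₁₄ α₂₃ α₂₄ β₁₄ = 0 ∧ sin (β₁₃ + β₁₄) = 0 ∧ sin β₂₄ = 0 :=
      and_congr_right fun h ↦ and_congr
        (jarlskog₂_eq_zero_iff_of_jarlskog₁_eq_zero h hc12 hc13 hc14 hc23 hc24 hs12 hs14 hs24)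
        (jarlskog₃_eq_zero_iff_of_jarlskog₁_eq_zero h hc13 hc14 hc23 hc24 hc34 hs13 hs14 hs34)
    _ ↔ sin β₁₄ = 0 ∧ sin β₁₃ = 0 ∧ sin β₂₄ = 0 := by
      rw [hJ₁]
      exact and_congr_right fun h ↦ and_congr_left' (sin_add_eq_zero_iff_of_sin_eq_zero h)
    _ ↔ sin β₁₃ = 0 ∧ sin β₁₄ = 0 ∧ sin β₂₄ = 0 := and_left_comm
end
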